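/- Let U ⊆ ℂ be open, j ∈ ℤ, let λ : U → ℂ be a nonvanishing continuously real-differentiable function, and let μ, γ : U → ℂ be continuously real-differentiable with ∂̄λ − μ·∂λ = λ·∂μ on U. Then the function c = γ·λ^{−j} satisfies, at every point of U: ∂̄c − μ·∂c = λ^{−j}·( ∂̄γ − μ·∂γ − j·(∂μ)·γ ). -/

import Mathlib

/-!
The operator `∂̄ − μ∂` is a derivation, so by the Leibniz and chain rules it sends `γ λ^{−j}` to
`λ^{−j} (∂̄ − μ∂)γ − j γ λ^{−j−1} (∂̄ − μ∂)λ`, and the equation `(∂̄ − μ∂)λ = λ ∂μ` turns the last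
term into `−j λ^{−j} (∂μ) γ`. The Leibniz and chain rules come from `fderiv_mul_zpow_apply`, the
real derivative of `γ λ^n` in a given direction.
-/

open Complex

/-- Wirtinger derivative `∂f(z) = ½(Df(z)(1) − i·Df(z)(i))` of a map `f : ℂ → ℂ`,
where `Df(z)` is the real Fréchet derivative. -/
noncomputable def wirtingerD (f : ℂ → ℂ) (z : ℂ) : ℂ :=
  ((fderiv ℝ f z) 1 - Complex.I * (fderiv ℝ f z) Complex.I) / 2

/-- Conjugate Wirtinger derivative `∂̄f(z) = ½(Df(z)(1) + i·Df(z)(i))`. -/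
noncomputable def wirtingerDBar (f : ℂ → ℂ) (z : ℂ) : ℂ :=
  ((fderiv ℝ f z) 1 + Complex.I * (fderiv ℝ f z) Complex.I) / 2

/-- The real Fréchet derivative of `g l ^ n`. Integer powers are complex differentiable away
from `0`, so the chain rule applies with the restriction of scalars of their complex derivative. -/
lemma fderiv_mul_zpow_apply {g l : ℂ → ℂ} {z : ℂ} (n : ℤ) (hg : DifferentiableAt ℝ g z)
    (hl : DifferentiableAt ℝ l z) (hz : l z ≠ 0) (v : ℂ) :
    fderiv ℝ (fun w => g w * l w ^ n) z v =
      l z ^ n * fderiv ℝ g z v + g z * (n * l z ^ (n - 1) * fderiv ℝ l z v) := by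
  have hp : HasFDerivAt (fun w => l w ^ n) _ z :=
    ((hasDerivAt_zpow n (l z) (Or.inl hz)).hasFDerivAt.restrictScalars ℝ).comp z hl.hasFDerivAt
  have h : HasFDerivAt (fun w => g w * l w ^ n) _ z := hg.hasFDerivAt.mul hp
  rw [h.fderiv]
  simp
  ring

/-- **The `∂̄`-operator on `(j,0)`-differentials in the Beltrami parametrization.**
If the integrating factor `λ` satisfies `∂̄λ − μ ∂λ = λ ∂μ` on `U` and is
nonvanishing there, then `c = γ λ^{−j}` satisfies
`∂̄c − μ ∂c = λ^{−j}(∂̄γ − μ ∂γ − j(∂μ)γ)` on `U`. -/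
theorem dbar_on_j_differentials
    (U : Set ℂ) (hU : IsOpen U) (j : ℤ)
    (l μ γ : ℂ → ℂ)
    (hlC1 : ContDiffOn ℝ 1 l U) (hlnz : ∀ z ∈ U, l z ≠ 0)
    (hμC1 : ContDiffOn ℝ 1 μ U) (hγC1 : ContDiffOn ℝ 1 γ U)
    (hint : ∀ z ∈ U,
      wirtingerDBar l z - μ z * wirtingerD l z = l z * wirtingerD μ z) :
    ∀ z ∈ U,
      wirtingerDBar (fun w => γ w * l w ^ (-j)) z -
          μ z * wirtingerD (fun w => γ w * l w ^ (-j)) z =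
        l z ^ (-j) *
          (wirtingerDBar γ z - μ z * wirtingerD γ z -
            (j : ℂ) * wirtingerD μ z * γ z) := by
  intro z hz
  have hUz : U ∈ nhds z := hU.mem_nhds hz
  have hl : DifferentiableAt ℝ l z := (hlC1.contDiffAt hUz).differentiableAt one_ne_zero
  have hγ : DifferentiableAt ℝ γ z := (hγC1.contDiffAt hUz).differentiableAt one_ne_zero
  have hl0 := hlnz z hz
  have hpow : l z ^ (-j) = l z ^ (-j - 1) * l z := by
    rw [← zpow_add_one₀ hl0, sub_add_cancel]
  have hi := hint z hz
  -- `∂μ` becomes a variable, as it enters only through the integrating factor equation.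
  generalize wirtingerD μ z = m at hi ⊢
  simp only [wirtingerD, wirtingerDBar] at hi ⊢
  simp only [fderiv_mul_zpow_apply (-j) hγ hl hl0, hpow]
  push_cast
  linear_combination (-(j : ℂ) * γ z * l z ^ (-j - 1)) * hi
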